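/- Let N ≥ 1 and Λ > 1. If (u₁, v₁) and (u₂, v₂) are two classical solutions of the system (P_Λ) with nonnegative components, both satisfying condition (h∞), then they coincide up to a translation: there exists τ ∈ ℝ^N such that u₂(x) = u₁(x + τ) and v₂(x) = v₁(x + τ) for all x ∈ ℝ^N. -/

import Mathlib

open scoped RealInnerProductSpace
open Filter

noncomputable section

/-- The Laplacian of `f : ℝ^N → ℝ`, as the sum of the pure second partial
derivatives in the coordinate directions. -/
def lap (N : ℕ) (f : EuclideanSpace ℝ (Fin N) → ℝ) (x : EuclideanSpace ℝ (Fin N)) : ℝ :=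
  ∑ i : Fin N,
    fderiv ℝ (fun y => fderiv ℝ f y (EuclideanSpace.single i 1)) x (EuclideanSpace.single i 1)

/-- `(u, v)` is a classical solution of the system `(P_Λ)` on `ℝ^N`:
`u, v` are `C²` and `-Δu = u - u³ - Λ u v²`, `-Δv = v - v³ - Λ u² v` pointwise. -/
def IsSolution (N : ℕ) (Λ : ℝ) (u v : EuclideanSpace ℝ (Fin N) → ℝ) : Prop :=
  ContDiff ℝ 2 u ∧ ContDiff ℝ 2 v ∧
  (∀ x, -lap N u x = u x - (u x) ^ 3 - Λ * u x * (v x) ^ 2) ∧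
  (∀ x, -lap N v x = v x - (v x) ^ 3 - Λ * (u x) ^ 2 * v x)

/-- Condition `(h∞)`: `u → 1`, `v → 0` as `x_N → +∞` and `u → 0`, `v → 1` as
`x_N → -∞`, uniformly with respect to `x' ∈ ℝ^{N-1}` (the dimension is `N + 1`). -/
def Hinf (N : ℕ) (u v : EuclideanSpace ℝ (Fin (N + 1)) → ℝ) : Prop :=
  (∀ ε : ℝ, 0 < ε → ∃ M : ℝ, ∀ x : EuclideanSpace ℝ (Fin (N + 1)),
    M ≤ x (Fin.last N) → |u x - 1| < ε ∧ |v x| < ε) ∧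
  (∀ ε : ℝ, 0 < ε → ∃ M : ℝ, ∀ x : EuclideanSpace ℝ (Fin (N + 1)),
    x (Fin.last N) ≤ M → |u x| < ε ∧ |v x - 1| < ε)

/-!
Nonnegative solutions satisfy `u, v ≤ 1`: the function `1 / (1 + u)` is bounded below, and at an
almost minimal point of it the cubic term would be too strong if `u` exceeded `1`. The bound on the
right-hand sides then makes `u` and `v` Lipschitz.

Write `(u₂, v₂) ≤ (u₁, v₁)` for `u₂ ≤ u₁` and `v₁ ≤ v₂`. Since `Λ > 1`, the states `(1, 0)` and
`(0, 1)` are stable, so this order can only fail where the solutions are far from both states, which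
is a strip around `e⊥`. Slide the first solution along `e` from a position where it dominates to the
critical one: there `u₁ - u₂` or `v₂ - v₁` has infimum `0` over a strip. Comparing a solution with
its own translates by a vector orthogonal to `e`, a quantitative strong maximum principle shows that
a nonzero critical shift would yield an almost-period, which the distinct limits at both ends
exclude. Hence every solution depends on `⟪e, x⟫` only, the infimum is attained, and the strong
maximum principle identifies the slid solution with the second one.
-/

open Metric Topology InnerProductSpace
open scoped Laplacian

/-! ### The Laplacian at an extremum -/

theorem nonneg_of_isLocalMin_of_hasDerivAt_hasDerivAt {g g' : ℝ → ℝ} {c t₀ : ℝ}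
    (hg : ∀ᶠ t in 𝓝 t₀, HasDerivAt g (g' t) t) (hg' : HasDerivAt g' c t₀)
    (hmin : IsLocalMin g t₀) : 0 ≤ c := by
  by_contra! hc
  have hderiv : deriv g =ᶠ[𝓝 t₀] g' := hg.mono fun t ht => ht.deriv
  have hderiv2 : deriv (deriv g) t₀ = c := by rw [hderiv.deriv_eq, hg'.deriv]
  have hmax : IsLocalMax g t₀ := isLocalMax_of_deriv_deriv_neg (hderiv2.trans_lt hc)
    hmin.deriv_eq_zero hg.self_of_nhds.continuousAt
  have hconst : g =ᶠ[𝓝 t₀] fun _ => g t₀ := by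
    filter_upwards [hmin, hmax] with t h₁ h₂ using le_antisymm h₂ h₁
  rw [hconst.deriv.deriv_eq] at hderiv2
  simp only [deriv_const', deriv_const] at hderiv2
  exact hc.ne hderiv2.symm

section Laplacian

variable {E : Type*} [NormedAddCommGroup E] [InnerProductSpace ℝ E]

theorem fderiv_fderiv_nonneg_of_isLocalMin {f : E → ℝ} {x : E} (hf : ContDiffAt ℝ 2 f x)
    (hmin : IsLocalMin f x) (v : E) : 0 ≤ fderiv ℝ (fderiv ℝ f) x v v := by
  have hline (t : ℝ) : HasDerivAt (fun t : ℝ => x + t • v) v t := by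
    simpa using ((hasDerivAt_id t).smul_const v).const_add x
  have htendsto : Tendsto (fun t : ℝ => x + t • v) (𝓝 0) (𝓝 x) := by
    simpa using (hline 0).continuousAt.tendsto
  have hdiff : ∀ᶠ y in 𝓝 x, DifferentiableAt ℝ f y :=
    (hf.eventually (by simp)).mono fun y hy => hy.differentiableAt (by simp)
  have hfderiv : DifferentiableAt ℝ (fderiv ℝ f) x :=
    (hf.fderiv_right (m := 1) (by norm_num)).differentiableAt (by simp)
  refine nonneg_of_isLocalMin_of_hasDerivAt_hasDerivAt (t₀ := 0) (g := fun t : ℝ => f (x + t • v))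
    (g' := fun t => fderiv ℝ f (x + t • v) v) ?_ ?_ ?_
  · filter_upwards [htendsto.eventually hdiff] with t ht
      using ht.hasFDerivAt.comp_hasDerivAt t (hline t)
  · have hcomp := hfderiv.hasFDerivAt.comp_hasDerivAt_of_eq (0 : ℝ) (hline 0) (by simp)
    exact hcomp.clm_apply (hasDerivAt_const _ v) |>.congr_deriv (by simp)
  · filter_upwards [htendsto.eventually hmin] with t ht
    simpa using ht

theorem contDiff_norm_sub_sq (y : E) : ContDiff ℝ 2 fun z => ‖z - y‖ ^ 2 :=
  (contDiff_id.sub contDiff_const).norm_sq ℝ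

theorem contDiff_inner_left (e : E) : ContDiff ℝ 2 fun z => ⟪e, z⟫ :=
  contDiff_const.inner ℝ contDiff_id

theorem fderiv_norm_sub_sq (x y : E) :
    fderiv ℝ (fun z => ‖z - y‖ ^ 2) x = 2 • innerSL ℝ (x - y) := by
  rw [fderiv_comp_sub (f := fun z : E => ‖z‖ ^ 2), fderiv_norm_sq_apply]

theorem norm_fderiv_inner_left (e x : E) : ‖fderiv ℝ (fun z => ⟪e, z⟫) x‖ = ‖e‖ :=
  (congrArg norm (innerSL ℝ e).hasFDerivAt.fderiv).trans (innerSL_apply_norm ℝ e)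

theorem norm_fderiv_norm_sub_sq (x y : E) :
    ‖fderiv ℝ (fun z => ‖z - y‖ ^ 2) x‖ = 2 * ‖x - y‖ := by
  rw [fderiv_norm_sub_sq, ← Nat.cast_smul_eq_nsmul ℝ, norm_smul, innerSL_apply_norm]
  norm_num

variable [FiniteDimensional ℝ E]

theorem laplacian_apply_eq_sum_fderiv_fderiv {ι : Type*} [Fintype ι] (b : OrthonormalBasis ι ℝ E)
    (f : E → ℝ) (x : E) : Δ f x = ∑ i, fderiv ℝ (fderiv ℝ f) x (b i) (b i) := by
  simp only [laplacian_eq_iteratedFDeriv_orthonormalBasis f b, iteratedFDeriv_two_apply,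
    Matrix.cons_val_zero, Matrix.cons_val_one]

theorem laplacian_nonneg_of_isLocalMin {f : E → ℝ} {x : E} (hf : ContDiffAt ℝ 2 f x)
    (hmin : IsLocalMin f x) : 0 ≤ Δ f x := by
  rw [laplacian_apply_eq_sum_fderiv_fderiv (stdOrthonormalBasis ℝ E)]
  exact Finset.sum_nonneg fun i _ => fderiv_fderiv_nonneg_of_isLocalMin hf hmin _

theorem le_on_of_laplacian_neg {K : Set E} (hK : IsCompact K) {f : E → ℝ} (hf : ContinuousOn f K)
    {m : ℝ} (hneg : ∀ x ∈ K, f x < m → x ∈ interior K ∧ ContDiffAt ℝ 2 f x ∧ Δ f x < 0) :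
    ∀ x ∈ K, m ≤ f x := by
  by_contra! hexists
  obtain ⟨x, hx, hfx⟩ := hexists
  obtain ⟨p, hp, hmin⟩ := hK.exists_isMinOn ⟨x, hx⟩ hf
  obtain ⟨hint, hfp, hlap⟩ := hneg p hp ((hmin hx).trans_lt hfx)
  exact hlap.not_ge
    (laplacian_nonneg_of_isLocalMin hfp (hmin.isLocalMin (mem_interior_iff_mem_nhds.1 hint)))

/-! ### Laplacians of composite functions -/

theorem laplacian_comp {f : E → ℝ} {x : E} {φ φ' : ℝ → ℝ} {φ'' : ℝ} (hf : ContDiffAt ℝ 2 f x)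
    (hφ : ∀ᶠ s in 𝓝 (f x), HasDerivAt φ (φ' s) s) (hφ' : HasDerivAt φ' φ'' (f x)) :
    Δ (fun y => φ (f y)) x = φ'' * ‖fderiv ℝ f x‖ ^ 2 + φ' (f x) * Δ f x := by
  have hdiff : ∀ᶠ y in 𝓝 x, DifferentiableAt ℝ f y :=
    (hf.eventually (by simp)).mono fun y hy => hy.differentiableAt (by simp)
  have hfderiv : DifferentiableAt ℝ (fderiv ℝ f) x :=
    (hf.fderiv_right (m := 1) (by norm_num)).differentiableAt (by simp)
  have hfirst : fderiv ℝ (fun y => φ (f y)) =ᶠ[𝓝 x] fun y => φ' (f y) • fderiv ℝ f y := by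
    filter_upwards [hdiff, hf.continuousAt.eventually hφ] with y hfy hφy
    exact (hφy.comp_hasFDerivAt y hfy.hasFDerivAt).fderiv
  have hsecond : fderiv ℝ (fun y => φ' (f y) • fderiv ℝ f y) x = _ :=
    ((hφ'.comp_hasFDerivAt x hdiff.self_of_nhds.hasFDerivAt).smul hfderiv.hasFDerivAt).fderiv
  let b := stdOrthonormalBasis ℝ E
  rw [laplacian_apply_eq_sum_fderiv_fderiv b, laplacian_apply_eq_sum_fderiv_fderiv b,
    hfirst.fderiv_eq, hsecond, b.norm_dual, Finset.mul_sum, Finset.mul_sum,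
    ← Finset.sum_add_distrib]
  refine Finset.sum_congr rfl fun i _ => ?_
  simp
  ring

theorem laplacian_norm_sub_sq (x y : E) :
    Δ (fun z => ‖z - y‖ ^ 2) x = 2 * Module.finrank ℝ E := by
  have hsecond : HasFDerivAt (fun z => 2 • innerSL ℝ (z - y)) (2 • innerSL ℝ) x :=
    (((innerSL ℝ).hasFDerivAt).comp x ((hasFDerivAt_id x).sub_const y)).const_smul 2
  let b := stdOrthonormalBasis ℝ E
  have hterm (i) : 2 • ⟪b i, b i⟫ = 2 := by simp
  rw [laplacian_apply_eq_sum_fderiv_fderiv b, funext fun z => fderiv_norm_sub_sq z y,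
    hsecond.fderiv]
  exact (Finset.sum_congr rfl fun i _ => hterm i).trans (by simp [mul_comm])

theorem laplacian_inner_left (e x : E) : Δ (fun z => ⟪e, z⟫) x = 0 := by
  have hfirst : fderiv ℝ (fun z => ⟪e, z⟫) = fun _ => innerSL ℝ e :=
    funext fun z => (innerSL ℝ e).hasFDerivAt.fderiv
  rw [laplacian_apply_eq_sum_fderiv_fderiv (stdOrthonormalBasis ℝ E), hfirst]
  simp

theorem laplacian_exp_neg_mul_norm_sub_sq (α : ℝ) (x y : E) :
    Δ (fun z => Real.exp (-α * ‖z - y‖ ^ 2)) x =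
      (4 * α ^ 2 * ‖x - y‖ ^ 2 - 2 * α * Module.finrank ℝ E) * Real.exp (-α * ‖x - y‖ ^ 2) := by
  have hφ (s : ℝ) : HasDerivAt (fun s => Real.exp (-α * s)) (-α * Real.exp (-α * s)) s := by
    simpa [mul_comm] using ((hasDerivAt_id s).const_mul (-α)).exp
  rw [laplacian_comp (contDiff_norm_sub_sq y).contDiffAt (Eventually.of_forall hφ)
    ((hφ _).const_mul (-α)), laplacian_norm_sub_sq, norm_fderiv_norm_sub_sq]
  ring

theorem laplacian_mul_inner_sub_inner_sq (c : ℝ) (e x : E) :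
    Δ (fun z => c * (⟪e, z⟫ - ⟪e, z⟫ ^ 2)) x = -2 * c * ‖e‖ ^ 2 := by
  have hφ (s : ℝ) : HasDerivAt (fun s => c * (s - s ^ 2)) (c * (1 - 2 * s)) s := by
    simpa using ((hasDerivAt_id s).sub (hasDerivAt_pow 2 s)).const_mul c
  have hφ' (s : ℝ) : HasDerivAt (fun s => c * (1 - 2 * s)) (-2 * c) s :=
    (((hasDerivAt_id s).const_mul 2).const_sub 1 |>.const_mul c).congr_deriv (by ring)
  rw [laplacian_comp (φ := fun s => c * (s - s ^ 2)) (contDiff_inner_left e).contDiffAt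
    (Eventually.of_forall hφ) (hφ' _), norm_fderiv_inner_left, laplacian_inner_left, mul_zero,
    add_zero]

theorem laplacian_comp_add_right {F : Type*} [NormedAddCommGroup F] [NormedSpace ℝ F] (f : E → F)
    (s x : E) : Δ (fun y => f (y + s)) x = Δ f (x + s) := by
  simp only [laplacian_eq_iteratedFDeriv_stdOrthonormalBasis, iteratedFDeriv_comp_add_right]

theorem laplacian_comp_linearIsometryEquiv {F : Type*} [NormedAddCommGroup F] [NormedSpace ℝ F]
    {f : E → F} (hf : ContDiff ℝ 2 f) (g : E ≃ₗᵢ[ℝ] E) (x : E) :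
    Δ (fun y => f (g y)) x = Δ f (g x) := by
  let b := stdOrthonormalBasis ℝ E
  rw [laplacian_eq_iteratedFDeriv_orthonormalBasis _ b,
    laplacian_eq_iteratedFDeriv_orthonormalBasis f (b.map g)]
  refine Finset.sum_congr rfl fun i _ => ?_
  have hcomp := (g : E →L[ℝ] E).iteratedFDeriv_comp_right hf x le_rfl
  simp only [Function.comp_def] at hcomp
  refine (congrArg (fun T => T ![b i, b i]) hcomp).trans ?_
  simp only [ContinuousMultilinearMap.compContinuousLinearMap_apply]
  congr 1
  ext j
  fin_cases j <;> rfl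

end Laplacian

/-! ### A priori estimates -/

section Estimates

variable {E : Type*} [NormedAddCommGroup E] [InnerProductSpace ℝ E] [FiniteDimensional ℝ E]

-- Minimize `f + η ‖· - x₀‖²` on the unit ball around an almost minimal point `x₀`.
theorem exists_lt_ciInf_add_and_norm_fderiv_le_and_neg_le_laplacian {f : E → ℝ}
    (hf : ContDiff ℝ 2 f) (hbdd : BddBelow (Set.range f)) {ε : ℝ} (hε : 0 < ε) :
    ∃ x, f x < (⨅ y, f y) + ε ∧ ‖fderiv ℝ f x‖ ≤ ε ∧ -ε ≤ Δ f x := by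
  set d : ℝ := (Module.finrank ℝ E : ℝ)
  have hd : 0 ≤ d := Nat.cast_nonneg _
  obtain ⟨η, hη, hηd⟩ : ∃ η > 0, η * (2 * d + 2) = ε :=
    ⟨ε / (2 * d + 2), by positivity, by field_simp⟩
  have hηε : 2 * η ≤ ε := by nlinarith [mul_nonneg hη.le hd]
  obtain ⟨x₀, hx₀⟩ : ∃ x₀, f x₀ < (⨅ y, f y) + η := exists_lt_of_ciInf_lt (lt_add_of_pos_right _ hη)
  have hq := contDiff_norm_sub_sq x₀
  have hηq : ContDiff ℝ 2 (η • fun z => ‖z - x₀‖ ^ 2) := contDiff_const.smul hq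
  set F : E → ℝ := f + η • fun z => ‖z - x₀‖ ^ 2
  have hF (z : E) : F z = f z + η * ‖z - x₀‖ ^ 2 := rfl
  have hFsmooth : ContDiff ℝ 2 F := hf.add hηq
  obtain ⟨p, hp, hmin⟩ := (isCompact_closedBall x₀ 1).exists_isMinOn_mem_subset (s := ball x₀ 1)
    hFsmooth.continuous.continuousOn (mem_closedBall_self zero_le_one) fun z hz => by
      have hz₁ : 1 ≤ ‖z - x₀‖ ^ 2 := one_le_pow₀ (by simpa [dist_eq_norm] using hz.2)
      have hinf : ⨅ y, f y ≤ f z := ciInf_le hbdd z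
      simp only [hF, sub_self, norm_zero]
      nlinarith
  have hp₁ : ‖p - x₀‖ < 1 := mem_ball_iff_norm.1 hp
  have hlocal : IsLocalMin F p :=
    hmin.isLocalMin (mem_of_superset (isOpen_ball.mem_nhds hp) ball_subset_closedBall)
  refine ⟨p, ?_, ?_, ?_⟩
  · have hFp : F p ≤ F x₀ := hmin (mem_closedBall_self zero_le_one)
    simp only [hF, sub_self, norm_zero] at hFp
    nlinarith [mul_nonneg hη.le (sq_nonneg ‖p - x₀‖)]
  · have hcrit : fderiv ℝ f p + η • fderiv ℝ (fun z => ‖z - x₀‖ ^ 2) p = 0 := by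
      rw [← fderiv_const_smul (hq.differentiable (by simp) p),
        ← fderiv_add (hf.differentiable (by simp) p) (hηq.differentiable (by simp) p)]
      exact hlocal.fderiv_eq_zero
    rw [eq_neg_of_add_eq_zero_left hcrit, norm_neg, norm_smul, norm_fderiv_norm_sub_sq,
      Real.norm_of_nonneg hη.le]
    nlinarith
  · have hlap := laplacian_nonneg_of_isLocalMin hFsmooth.contDiffAt hlocal
    rw [hf.contDiffAt.laplacian_add hηq.contDiffAt, laplacian_smul η hq.contDiffAt,
      laplacian_norm_sub_sq, smul_eq_mul] at hlap
    linarith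

-- Keller–Osserman bound: apply the previous principle to the bounded function `1 / (1 + u)`.
theorem le_one_of_cube_sub_le_laplacian {u : E → ℝ} (hu : ContDiff ℝ 2 u) (hnonneg : ∀ x, 0 ≤ u x)
    (hlap : ∀ x, u x ^ 3 - u x ≤ Δ u x) (x : E) : u x ≤ 1 := by
  have hpos (x : E) : 0 < 1 + u x := by linarith [hnonneg x]
  let g : E → ℝ := fun x => (1 + u x)⁻¹
  have hg : ContDiff ℝ 2 g := (contDiff_const.add hu).inv fun x => (hpos x).ne'
  have hgpos (x : E) : 0 < g x := inv_pos.2 (hpos x)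
  have hgu (x : E) : g x * u x = 1 - g x := by
    linarith [inv_mul_cancel₀ (hpos x).ne', mul_add (g x) 1 (u x)]
  have hug : u = fun x => (g x)⁻¹ - 1 := by simp [g]
  have hlapg (x : E) : (1 - g x) * (1 - 2 * g x) ≤ 2 * ‖fderiv ℝ g x‖ ^ 2 - g x * Δ g x := by
    have hchain : Δ u x = 2 / g x ^ 3 * ‖fderiv ℝ g x‖ ^ 2 + -(g x ^ 2)⁻¹ * Δ g x := by
      rw [hug]
      refine laplacian_comp (φ := fun s => s⁻¹ - 1) (φ' := fun s => -(s ^ 2)⁻¹) hg.contDiffAt ?_ ?_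
      · filter_upwards [lt_mem_nhds (hgpos x)] with s hs using (hasDerivAt_inv hs.ne').sub_const 1
      · refine ((hasDerivAt_pow 2 (g x)).fun_inv (pow_pos (hgpos x) 2).ne').neg.congr_deriv ?_
        field_simp [(hgpos x).ne']
        norm_num [mul_comm]
    calc (1 - g x) * (1 - 2 * g x) = g x ^ 3 * (u x ^ 3 - u x) := by
          linear_combination (-(g x) ^ 2 * u x ^ 2 - g x * u x * (1 - g x)
            + g x ^ 2 - (1 - g x) ^ 2) * hgu x
      _ ≤ g x ^ 3 * Δ u x := mul_le_mul_of_nonneg_left (hlap x) (pow_pos (hgpos x) 3).le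
      _ = 2 * ‖fderiv ℝ g x‖ ^ 2 - g x * Δ g x := by
          rw [hchain]
          field_simp [(hgpos x).ne']
          ring
  have hbdd : BddBelow (Set.range g) := ⟨0, Set.forall_mem_range.2 fun x => (hgpos x).le⟩
  have hinf : 1 / 2 ≤ ⨅ y, g y := by
    by_contra! hlt
    set m := ⨅ y, g y
    obtain ⟨p, hp, hgrad, hlapp⟩ := exists_lt_ciInf_add_and_norm_fderiv_le_and_neg_le_laplacian
      hg hbdd (ε := (1 - 2 * m) / 8) (by linarith)
    have hm : 0 ≤ m := Real.iInf_nonneg fun x => (hgpos x).le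
    have hgradsq := pow_le_pow_left₀ (norm_nonneg _) hgrad 2
    nlinarith [hm, hlapg p, hgpos p, mul_le_mul_of_nonneg_left hlapp (hgpos p).le]
  have hx : 1 / 2 ≤ g x := hinf.trans (ciInf_le hbdd x)
  nlinarith [hgu x, hnonneg x]

-- Brandt's comparison function: quadratic in `z`, and concave in the distance to `e⊥`.
theorem le_barrier_on_halfBall {w : E → ℝ} (hw : ContDiff ℝ 2 w) {e : E} (he : ‖e‖ = 1) {A c : ℝ}
    (hAnonneg : 0 ≤ A) (hc : 0 ≤ c) (hA : ∀ z, w z ≤ A) (hplane : ∀ z, ⟪e, z⟫ = 0 → w z ≤ 0)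
    (hlap : ∀ z, 2 * A * Module.finrank ℝ E - 2 * c < Δ w z) {x : E} (hx : ‖x‖ ≤ 1)
    (hex : 0 ≤ ⟪e, x⟫) : w x ≤ A * ‖x‖ ^ 2 + c * (⟪e, x⟫ - ⟪e, x⟫ ^ 2) := by
  have hinner := contDiff_inner_left e
  let q : E → ℝ := fun z => ‖z - 0‖ ^ 2
  let b : E → ℝ := fun z => c * (⟪e, z⟫ - ⟪e, z⟫ ^ 2)
  have hq : ContDiff ℝ 2 q := contDiff_norm_sub_sq 0
  have hAq : ContDiff ℝ 2 (A • q) := contDiff_const.smul hq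
  have hb : ContDiff ℝ 2 b := contDiff_const.mul (hinner.sub (hinner.pow 2))
  have hAqb : ContDiff ℝ 2 (A • q + b) := hAq.add hb
  have hF (z : E) :
      (A • q + b - w) z = A * ‖z‖ ^ 2 + c * (⟪e, z⟫ - ⟪e, z⟫ ^ 2) - w z := by simp [q, b]
  have hlapF (z : E) : Δ (A • q + b - w) z < 0 := by
    rw [hAqb.contDiffAt.laplacian_sub hw.contDiffAt, hAq.contDiffAt.laplacian_add hb.contDiffAt,
      laplacian_smul A hq.contDiffAt, laplacian_norm_sub_sq, laplacian_mul_inner_sub_inner_sq, he,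
      smul_eq_mul]
    linarith [hlap z]
  have hK : IsCompact (closedBall 0 1 ∩ {z | 0 ≤ ⟪e, z⟫}) := (isCompact_closedBall 0 1).inter_right
    (isClosed_le continuous_const hinner.continuous)
  suffices 0 ≤ (A • q + b - w) x by linarith [hF x]
  refine le_on_of_laplacian_neg hK (hAqb.sub hw).continuous.continuousOn (fun z hz hFz => ?_) x
    ⟨mem_closedBall_zero_iff.2 hx, hex⟩
  change (A • q + b - w) z < 0 at hFz
  have hz₁ : ‖z‖ ≤ 1 := mem_closedBall_zero_iff.1 hz.1
  have hz₀ : 0 ≤ ⟪e, z⟫ := hz.2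
  have hez : ⟪e, z⟫ ≤ 1 := (real_inner_le_norm e z).trans (by rwa [he, one_mul])
  have hconcz : 0 ≤ c * (⟪e, z⟫ - ⟪e, z⟫ ^ 2) := mul_nonneg hc (by nlinarith)
  rw [hF] at hFz
  have hne₁ : ‖z‖ ≠ 1 := fun h => by rw [h] at hFz; linarith [hA z]
  have hne₀ : ⟪e, z⟫ ≠ 0 := fun h => by nlinarith [hplane z h, mul_nonneg hAnonneg (sq_nonneg ‖z‖)]
  refine ⟨?_, (hAqb.sub hw).contDiffAt, hlapF z⟩
  exact interior_maximal (Set.inter_subset_inter ball_subset_closedBall fun _ => le_of_lt)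
    (isOpen_ball.inter (isOpen_lt continuous_const hinner.continuous))
    ⟨mem_ball_zero_iff.2 (hz₁.lt_of_ne hne₁), hz₀.lt_of_ne hne₀.symm⟩

-- Apply the half-ball barrier to `u` minus its reflection in the perpendicular bisector of `x, y`.
theorem sub_le_of_bounded_laplacian {u : E → ℝ} (hu : ContDiff ℝ 2 u) {B C : ℝ}
    (hB : ∀ x, |u x| ≤ B) (hC : ∀ x, |Δ u x| ≤ C) {e : E} (he : ‖e‖ = 1) {h : ℝ} (h₀ : 0 ≤ h)
    (h₁ : h ≤ 1) (m : E) :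
    u (m + h • e) - u (m - h • e) ≤ (2 * B + (2 * B * Module.finrank ℝ E + C + 1)) * h := by
  have hB₀ : 0 ≤ B := (abs_nonneg _).trans (hB m)
  have hC₀ : 0 ≤ C := (abs_nonneg _).trans (hC m)
  set c : ℝ := 2 * B * Module.finrank ℝ E + C + 1 with hc
  have hc₀ : 0 ≤ c := by positivity
  let ρ : E ≃ₗᵢ[ℝ] E := (ℝ ∙ e)ᗮ.reflection
  have hum : ContDiff ℝ 2 fun z => u (z + m) := hu.comp (contDiff_id.add contDiff_const)
  have huρ : ContDiff ℝ 2 fun z => u (ρ z + m) := hum.comp ρ.contDiff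
  let w : E → ℝ := (fun z => u (z + m)) - fun z => u (ρ z + m)
  have hw (z : E) : w z = u (z + m) - u (ρ z + m) := rfl
  have hlapw (z : E) : Δ w z = Δ u (z + m) - Δ u (ρ z + m) := by
    rw [hum.contDiffAt.laplacian_sub huρ.contDiffAt, laplacian_comp_linearIsometryEquiv hum,
      laplacian_comp_add_right, laplacian_comp_add_right]
  have hbarrier := le_barrier_on_halfBall (w := w) (x := h • e) (A := 2 * B) (c := c) (hum.sub huρ)
    he (by positivity) (by positivity)
    (fun z => by linarith [hw z, abs_le.1 (hB (z + m)), abs_le.1 (hB (ρ z + m))])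
    (fun z hz => ?_) (fun z => ?_) (by rwa [norm_smul, he, mul_one, Real.norm_of_nonneg h₀])
    (by rw [real_inner_smul_right, real_inner_self_eq_norm_sq, he]; linarith)
  · have hρ : ρ (h • e) = -(h • e) := by
      rw [map_smul, Submodule.reflection_orthogonalComplement_singleton_eq_neg, smul_neg]
    simp only [hw, hρ, norm_smul, he, Real.norm_of_nonneg h₀, real_inner_smul_right,
      real_inner_self_eq_norm_sq] at hbarrier
    rw [add_comm m, sub_eq_neg_add m]
    nlinarith [mul_nonneg (mul_nonneg hB₀ h₀) (sub_nonneg.2 h₁), mul_nonneg hc₀ (sq_nonneg h)]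
  · have hρ : ρ z = z := (Submodule.reflection_eq_self_iff z).2
      (Submodule.mem_orthogonal_singleton_iff_inner_right.2 hz)
    rw [hw, hρ, sub_self]
  · rw [hlapw]
    linarith [hc, abs_le.1 (hC (z + m)), abs_le.1 (hC (ρ z + m))]

theorem exists_lipschitzWith_of_bounded_laplacian {u : E → ℝ} (hu : ContDiff ℝ 2 u) {B C : ℝ}
    (hB : ∀ x, |u x| ≤ B) (hC : ∀ x, |Δ u x| ≤ C) : ∃ L, LipschitzWith L u := by
  have hB₀ : 0 ≤ B := (abs_nonneg _).trans (hB 0)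
  have hC₀ : 0 ≤ C := (abs_nonneg _).trans (hC 0)
  let L : ℝ := 2 * B + (2 * B * Module.finrank ℝ E + C + 1)
  refine ⟨L.toNNReal, LipschitzWith.of_le_add_mul _ fun x y => ?_⟩
  rw [Real.coe_toNNReal L (by positivity), ← sub_le_iff_le_add', dist_eq_norm]
  rcases le_total ‖x - y‖ 2 with hle | hge
  · rcases eq_or_ne x y with rfl | hxy
    · simp
    have hne : ‖x - y‖ ≠ 0 := norm_sub_eq_zero_iff.not.2 hxy
    have hhalf : (‖x - y‖ / 2) • ‖x - y‖⁻¹ • (x - y) = (2⁻¹ : ℝ) • (x - y) := by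
      rw [smul_smul]
      congr 1
      field_simp
    have hbisect := sub_le_of_bounded_laplacian hu hB hC (e := ‖x - y‖⁻¹ • (x - y))
      (by rw [norm_smul, norm_inv, norm_norm, inv_mul_cancel₀ hne]) (h := ‖x - y‖ / 2)
      (by positivity) (by linarith) ((2⁻¹ : ℝ) • (x + y))
    rw [hhalf, ← smul_add, ← smul_sub, show x + y + (x - y) = (2 : ℝ) • x by module,
      show x + y - (x - y) = (2 : ℝ) • y by module, inv_smul_smul₀ two_ne_zero,
      inv_smul_smul₀ two_ne_zero] at hbisect
    have hL : 0 ≤ L * ‖x - y‖ := by positivity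
    linarith
  · have hLB : B ≤ L := by
      have : 0 ≤ 2 * B * Module.finrank ℝ E := by positivity
      linarith
    nlinarith [abs_le.1 (hB x), abs_le.1 (hB y)]

theorem gaussian_barrier_le {w : E → ℝ} (hw : ContDiff ℝ 2 w) (hnonneg : ∀ x, 0 ≤ w x) {K : ℝ}
    (hK : 0 ≤ K) (hlap : ∀ x, Δ w x ≤ K * w x) {α r c ρ : ℝ} {y : E} (hα : 0 ≤ α) (hr : 0 ≤ r)
    (hαr : K < 4 * α ^ 2 * r ^ 2 - 2 * α * Module.finrank ℝ E) (hc : 0 < c)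
    (hwc : ∀ z, ‖z - y‖ < r → c ≤ w z) {x : E} (hx : ‖x - y‖ ≤ ρ) :
    c * (Real.exp (-α * ‖x - y‖ ^ 2) - Real.exp (-α * ρ ^ 2)) ≤ w x := by
  let G : E → ℝ := fun z => Real.exp (-α * ‖z - y‖ ^ 2)
  have hG : ContDiff ℝ 2 G := (contDiff_const.mul (contDiff_norm_sub_sq y)).exp
  have hGpos (z : E) : 0 < G z := Real.exp_pos _
  have hG₁ (z : E) : G z ≤ 1 := Real.exp_le_one_iff.2 (by nlinarith [sq_nonneg ‖z - y‖])
  have hcG : ContDiff ℝ 2 (c • G) := contDiff_const.smul hG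
  have hFsmooth : ContDiff ℝ 2 (w - c • G) := hw.sub hcG
  have hbarrier : -(c * Real.exp (-α * ρ ^ 2)) ≤ w x - c * G x := by
    refine le_on_of_laplacian_neg (f := w - c • G) (isCompact_closedBall y ρ)
      hFsmooth.continuous.continuousOn (fun z hz hFz => ?_) x (mem_closedBall_iff_norm.2 hx)
    have hwz : w z < c * (G z - Real.exp (-α * ρ ^ 2)) := by
      linarith [show w z - c * G z < _ from hFz]
    have hρpos : 0 < c * Real.exp (-α * ρ ^ 2) := by positivity
    have hzρ : ‖z - y‖ < ρ := by
      refine (mem_closedBall_iff_norm.1 hz).lt_of_ne fun h => ?_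
      simp only [G, h, sub_self, mul_zero] at hwz
      exact hwz.not_ge (hnonneg z)
    have hrz : r ≤ ‖z - y‖ := by
      by_contra! h
      nlinarith [hwc z h, hG₁ z]
    refine ⟨interior_maximal ball_subset_closedBall isOpen_ball (mem_ball_iff_norm.2 hzρ),
      hFsmooth.contDiffAt, ?_⟩
    rw [hw.contDiffAt.laplacian_sub hcG.contDiffAt,
      laplacian_smul c hG.contDiffAt, laplacian_exp_neg_mul_norm_sub_sq, smul_eq_mul, sub_neg]
    calc Δ w z ≤ K * w z := hlap z
      _ ≤ K * (c * G z) := by gcongr; nlinarith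
      _ < (4 * α ^ 2 * r ^ 2 - 2 * α * Module.finrank ℝ E) * (c * G z) :=
          mul_lt_mul_of_pos_right hαr (mul_pos hc (hGpos z))
      _ ≤ (4 * α ^ 2 * ‖z - y‖ ^ 2 - 2 * α * Module.finrank ℝ E) * (c * G z) := by
          have := hGpos z
          gcongr
      _ = c * ((4 * α ^ 2 * ‖z - y‖ ^ 2 - 2 * α * Module.finrank ℝ E) * G z) := by ring
  linarith

/-- Smallness of `w` at a point spreads to balls of any given radius, uniformly in the centre: a
quantitative form of the strong maximum principle. -/
def PropagatesSmallness {X : Type*} [PseudoMetricSpace X] (w : X → ℝ) : Prop :=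
  ∀ R, ∀ ε > 0, ∃ δ > 0, ∀ x y, dist x y ≤ R → w x < δ → w y < ε

theorem propagatesSmallness_of_laplacian_le {w : E → ℝ} (hw : ContDiff ℝ 2 w)
    (hunif : UniformContinuous w) (hnonneg : ∀ x, 0 ≤ w x) {K : ℝ}
    (hlap : ∀ x, Δ w x ≤ K * w x) : PropagatesSmallness w := by
  intro R ε hε
  obtain ⟨r, hr, hunif⟩ := Metric.uniformContinuous_iff.1 hunif (ε / 2) (by positivity)
  set d : ℝ := (Module.finrank ℝ E : ℝ)
  obtain ⟨α, hα, hαr⟩ : ∃ α > 0, |K| < 4 * α ^ 2 * r ^ 2 - 2 * α * d := by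
    refine ⟨(2 * d + |K| + 1) / (4 * r ^ 2) + 1, by positivity, ?_⟩
    set α := (2 * d + |K| + 1) / (4 * r ^ 2) + 1 with hα
    have hα₁ : 1 ≤ α := by
      rw [hα, le_add_iff_nonneg_left]
      positivity
    have hαr : 4 * α * r ^ 2 = 2 * d + |K| + 1 + 4 * r ^ 2 := by
      rw [hα]
      field_simp
    have : 4 * α ^ 2 * r ^ 2 - 2 * α * d = α * (|K| + 1 + 4 * r ^ 2) := by
      linear_combination α * hαr
    nlinarith [abs_nonneg K, mul_pos hr hr]
  have hexp : Real.exp (-α * (|R| + 1) ^ 2) < Real.exp (-α * |R| ^ 2) :=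
    Real.exp_lt_exp.2 (by nlinarith [abs_nonneg R])
  refine ⟨ε / 2 * (Real.exp (-α * |R| ^ 2) - Real.exp (-α * (|R| + 1) ^ 2)),
    mul_pos (half_pos hε) (sub_pos.2 hexp), fun x y hxy hwx => ?_⟩
  have hxy' : ‖x - y‖ ≤ |R| := (dist_eq_norm x y ▸ hxy).trans (le_abs_self R)
  by_contra! hwy
  have hbarrier := gaussian_barrier_le hw hnonneg (abs_nonneg K)
    (fun z => (hlap z).trans (mul_le_mul_of_nonneg_right (le_abs_self K) (hnonneg z))) hα.le hr.le
    hαr (half_pos hε) (y := y) (fun z hz => ?_) (hxy'.trans (le_add_of_nonneg_right zero_le_one))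
  · have hsq : ‖x - y‖ ^ 2 ≤ |R| ^ 2 := pow_le_pow_left₀ (norm_nonneg _) hxy' 2
    have hmono : Real.exp (-α * |R| ^ 2) ≤ Real.exp (-α * ‖x - y‖ ^ 2) :=
      Real.exp_le_exp.2 (mul_le_mul_of_nonpos_left hsq (by linarith))
    nlinarith
  · have hclose := hunif (dist_eq_norm z y ▸ hz)
    rw [Real.dist_eq, abs_lt] at hclose
    linarith

theorem PropagatesSmallness.eq_zero {X : Type*} [PseudoMetricSpace X] {w : X → ℝ}
    (hw : PropagatesSmallness w) (hnonneg : ∀ x, 0 ≤ w x) {p : X} (hp : w p = 0) (x : X) :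
    w x = 0 := by
  refine le_antisymm (le_of_forall_pos_lt_add fun ε hε => ?_) (hnonneg x)
  obtain ⟨δ, hδ, h⟩ := hw (dist p x) ε hε
  rw [zero_add]
  exact h p x le_rfl (hp.trans_lt hδ)

end Estimates

/-! ### Nonnegative solutions of the system -/

section System

variable {E : Type*} [NormedAddCommGroup E] [InnerProductSpace ℝ E] [FiniteDimensional ℝ E]
  {Λ η : ℝ} {u v u₁ v₁ u₂ v₂ : E → ℝ}

/-- The reaction term of the first equation of `(P_Λ)` at the state `(a, b)`. The second equation
has the reaction term `reaction Λ b a`. -/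
def reaction (Λ a b : ℝ) : ℝ := a - a ^ 3 - Λ * a * b ^ 2

/-- `(u, v)` is a classical solution of `(P_Λ)` with nonnegative components, on a Euclidean space
without preferred coordinates. -/
structure IsNonnegSolution (Λ : ℝ) (u v : E → ℝ) : Prop where
  contDiff_u : ContDiff ℝ 2 u
  contDiff_v : ContDiff ℝ 2 v
  neg_laplacian_u : ∀ x, -Δ u x = reaction Λ (u x) (v x)
  neg_laplacian_v : ∀ x, -Δ v x = reaction Λ (v x) (u x)
  nonneg_u : ∀ x, 0 ≤ u x
  nonneg_v : ∀ x, 0 ≤ v x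

namespace IsNonnegSolution

theorem swap (h : IsNonnegSolution Λ u v) : IsNonnegSolution Λ v u :=
  ⟨h.contDiff_v, h.contDiff_u, h.neg_laplacian_v, h.neg_laplacian_u, h.nonneg_v, h.nonneg_u⟩

theorem translate (h : IsNonnegSolution Λ u v) (s : E) :
    IsNonnegSolution Λ (fun x => u (x + s)) (fun x => v (x + s)) where
  contDiff_u := h.contDiff_u.comp (contDiff_id.add contDiff_const)
  contDiff_v := h.contDiff_v.comp (contDiff_id.add contDiff_const)
  neg_laplacian_u x := by rw [laplacian_comp_add_right, h.neg_laplacian_u]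
  neg_laplacian_v x := by rw [laplacian_comp_add_right, h.neg_laplacian_v]
  nonneg_u x := h.nonneg_u (x + s)
  nonneg_v x := h.nonneg_v (x + s)

theorem u_le_one (h : IsNonnegSolution Λ u v) (hΛ : 0 ≤ Λ) (x : E) : u x ≤ 1 := by
  refine le_one_of_cube_sub_le_laplacian h.contDiff_u h.nonneg_u (fun y => ?_) x
  have hcoupling : 0 ≤ Λ * u y * v y ^ 2 := by
    have := h.nonneg_u y
    positivity
  have heq := h.neg_laplacian_u y
  rw [reaction] at heq
  linarith

theorem v_le_one (h : IsNonnegSolution Λ u v) (hΛ : 0 ≤ Λ) (x : E) : v x ≤ 1 :=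
  h.swap.u_le_one hΛ x

theorem uniformContinuous_u (h : IsNonnegSolution Λ u v) (hΛ : 0 ≤ Λ) : UniformContinuous u := by
  have hlap (x : E) : |Δ u x| ≤ 1 + Λ := by
    have hu₀ := h.nonneg_u x
    have hcube : u x ^ 3 ≤ 1 := pow_le_one₀ hu₀ (h.u_le_one hΛ x)
    have hcoupling : Λ * u x * v x ^ 2 ≤ Λ * 1 * 1 := by
      gcongr
      exacts [h.u_le_one hΛ x, pow_le_one₀ (h.nonneg_v x) (h.v_le_one hΛ x)]
    have hcube₀ : 0 ≤ u x ^ 3 := by positivity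
    have hcoupling₀ : 0 ≤ Λ * u x * v x ^ 2 := by positivity
    rw [← abs_neg, h.neg_laplacian_u, reaction, abs_le]
    constructor <;> linarith [h.u_le_one hΛ x]
  obtain ⟨L, hL⟩ := exists_lipschitzWith_of_bounded_laplacian h.contDiff_u
    (fun x => abs_le.2 ⟨by linarith [h.nonneg_u x], h.u_le_one hΛ x⟩) hlap
  exact hL.uniformContinuous

theorem uniformContinuous_v (h : IsNonnegSolution Λ u v) (hΛ : 0 ≤ Λ) : UniformContinuous v :=
  h.swap.uniformContinuous_u hΛ

theorem laplacian_sub (h₁ : IsNonnegSolution Λ u₁ v₁) (h₂ : IsNonnegSolution Λ u₂ v₂) (x : E) :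
    Δ (u₁ - u₂) x = reaction Λ (u₂ x) (v₂ x) - reaction Λ (u₁ x) (v₁ x) := by
  rw [h₁.contDiff_u.contDiffAt.laplacian_sub h₂.contDiff_u.contDiffAt, ← h₁.neg_laplacian_u,
    ← h₂.neg_laplacian_u]
  ring

end IsNonnegSolution

/-- The state `(a, b)` of `(P_Λ)`, with `a ≤ 1` and `0 ≤ b` understood, is within `η` of the stable
equilibrium `(1, 0)`. Closeness to the other stable equilibrium `(0, 1)` is `NearOneZero η b a`. -/
def NearOneZero (η a b : ℝ) : Prop := 1 - η ≤ a ∧ b ≤ η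

theorem neg_mul_le_mul_of_neg_le {c C z m : ℝ} (hc : 0 ≤ c) (hC : 0 ≤ C) (hcC : z ≤ 0 → c ≤ C)
    (hm : 0 ≤ m) (hz : -m ≤ z) : -(C * m) ≤ c * z := by
  rcases le_total 0 z with hz₀ | hz₀
  · nlinarith [mul_nonneg hc hz₀, mul_nonneg hC hm]
  · nlinarith [hcC hz₀]

theorem reaction_gap_of_nearOneZero_left (hΛ : 1 < Λ) (hη₀ : 0 ≤ η) (hη : 16 * Λ * η ≤ 1)
    {m a₁ b₁ a₂ b₂ : ℝ} (hm : 0 ≤ m) (ha₂ : a₂ ≤ 1) (hb₁ : 0 ≤ b₁) (hb₂ : 0 ≤ b₂)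
    (ha : a₁ - a₂ ≤ -(m / 2)) (hb : -m ≤ b₂ - b₁) (hnear : NearOneZero η a₁ b₁) :
    4 * Λ * η * m ≤ reaction Λ a₁ b₁ - reaction Λ a₂ b₂ := by
  obtain ⟨ha₁, hb₁η⟩ := hnear
  have hη' : 16 * η ≤ 1 := by nlinarith
  have hdiff : reaction Λ a₁ b₁ - reaction Λ a₂ b₂ =
      (a₁ ^ 2 + a₁ * a₂ + a₂ ^ 2 + Λ * b₁ ^ 2 - 1) * (a₂ - a₁) +
        Λ * a₂ * (b₁ + b₂) * (b₂ - b₁) := by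
    rw [reaction, reaction]
    ring
  have hcoeff : 1 ≤ a₁ ^ 2 + a₁ * a₂ + a₂ ^ 2 + Λ * b₁ ^ 2 - 1 := by
    have : 0 ≤ Λ * b₁ ^ 2 := by positivity
    nlinarith
  have hmain : m / 2 ≤ (a₁ ^ 2 + a₁ * a₂ + a₂ ^ 2 + Λ * b₁ ^ 2 - 1) * (a₂ - a₁) := by nlinarith
  have hcross : -(2 * Λ * η * m) ≤ Λ * a₂ * (b₁ + b₂) * (b₂ - b₁) := by
    have ha₂₀ : 0 ≤ a₂ := by linarith
    refine neg_mul_le_mul_of_neg_le (by positivity) (by positivity) (fun hb₁₂ => ?_) hm hb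
    calc Λ * a₂ * (b₁ + b₂) ≤ Λ * 1 * (η + η) := by gcongr; linarith
      _ = 2 * Λ * η := by ring
  nlinarith

theorem reaction_gap_of_nearOneZero_right (hΛ : 0 ≤ Λ) (hη₀ : 0 ≤ η) (hη : 16 * Λ * η ≤ Λ - 1)
    {m a₁ b₁ a₂ b₂ : ℝ} (hm : 0 ≤ m) (ha₁ : 0 ≤ a₁) (ha₂ : 0 ≤ a₂) (hb₁ : 0 ≤ b₁) (hb₁' : b₁ ≤ 1)
    (hb₂ : 0 ≤ b₂) (ha : a₁ - a₂ ≤ -(m / 2)) (hb : -m ≤ b₂ - b₁) (hnear : NearOneZero η b₂ a₂) :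
    4 * Λ * η * m ≤ reaction Λ a₁ b₁ - reaction Λ a₂ b₂ := by
  obtain ⟨hb₂η, ha₂η⟩ := hnear
  have hdiff : reaction Λ a₁ b₁ - reaction Λ a₂ b₂ =
      (a₁ ^ 2 + a₁ * a₂ + a₂ ^ 2 + Λ * b₂ ^ 2 - 1) * (a₂ - a₁) +
        Λ * a₁ * (b₁ + b₂) * (b₂ - b₁) := by
    rw [reaction, reaction]
    ring
  have hcoeff : 14 * Λ * η ≤ a₁ ^ 2 + a₁ * a₂ + a₂ ^ 2 + Λ * b₂ ^ 2 - 1 := by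
    have hsq : 1 - 2 * η ≤ b₂ ^ 2 := by nlinarith [sq_nonneg (b₂ - 1)]
    nlinarith [mul_le_mul_of_nonneg_left hsq hΛ, mul_nonneg ha₁ ha₂]
  have hmain : 14 * Λ * η * (m / 2) ≤
      (a₁ ^ 2 + a₁ * a₂ + a₂ ^ 2 + Λ * b₂ ^ 2 - 1) * (a₂ - a₁) :=
    mul_le_mul hcoeff (by linarith) (by positivity) (le_trans (by positivity) hcoeff)
  have hcross : -(2 * Λ * η * m) ≤ Λ * a₁ * (b₁ + b₂) * (b₂ - b₁) := by
    refine neg_mul_le_mul_of_neg_le (by positivity) (by positivity) (fun hb₁₂ => ?_) hm hb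
    calc Λ * a₁ * (b₁ + b₂) ≤ Λ * η * (1 + 1) := by gcongr <;> linarith
      _ = 2 * Λ * η := by ring
  have : 0 ≤ Λ * η * m := by positivity
  linarith

theorem iInf_sub_nonneg_of_nearOneZero (hΛ : 1 < Λ) (hη₀ : 0 < η) (hη : 16 * Λ * η ≤ 1)
    (hη' : 16 * Λ * η ≤ Λ - 1) (h₁ : IsNonnegSolution Λ u₁ v₁) (h₂ : IsNonnegSolution Λ u₂ v₂)
    (hnear : ∀ x, u₁ x < u₂ x →
      NearOneZero η (u₁ x) (v₁ x) ∨ NearOneZero η (v₂ x) (u₂ x))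
    (hle : ∀ x, ⨅ y, (u₁ - u₂) y ≤ v₂ x - v₁ x) : 0 ≤ ⨅ x, (u₁ - u₂) x := by
  have hΛ₀ : 0 < Λ := one_pos.trans hΛ
  by_contra! hneg
  obtain ⟨m, hm⟩ : ∃ m, m = -⨅ x, (u₁ - u₂) x := ⟨_, rfl⟩
  have hm₀ : 0 < m := by linarith
  have hbdd : BddBelow (Set.range (u₁ - u₂)) := ⟨-1, by
    rintro _ ⟨y, rfl⟩
    linarith [h₁.nonneg_u y, h₂.u_le_one hΛ₀.le y, Pi.sub_apply u₁ u₂ y]⟩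
  obtain ⟨x, hx, -, hlap⟩ := exists_lt_ciInf_add_and_norm_fderiv_le_and_neg_le_laplacian
    (f := u₁ - u₂) (h₁.contDiff_u.sub h₂.contDiff_u) hbdd (ε := 2 * Λ * η * m) (by positivity)
  have hgap₀ : 0 < Λ * η * m := by positivity
  have hux : u₁ x - u₂ x ≤ -(m / 2) := by
    rw [Pi.sub_apply] at hx
    nlinarith
  have hvx : -m ≤ v₂ x - v₁ x := by linarith [hle x]
  have hgap : 4 * Λ * η * m ≤ reaction Λ (u₁ x) (v₁ x) - reaction Λ (u₂ x) (v₂ x) := by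
    rcases hnear x (by linarith) with hnear | hnear
    · exact reaction_gap_of_nearOneZero_left hΛ hη₀.le hη hm₀.le (h₂.u_le_one hΛ₀.le x)
        (h₁.nonneg_v x) (h₂.nonneg_v x) hux hvx hnear
    · exact reaction_gap_of_nearOneZero_right hΛ₀.le hη₀.le hη' hm₀.le (h₁.nonneg_u x)
        (h₂.nonneg_u x) (h₁.nonneg_v x) (h₁.v_le_one hΛ₀.le x) (h₂.nonneg_v x) hux hvx hnear
  rw [h₁.laplacian_sub h₂] at hlap
  linarith

-- The component with the lower infimum is treated first: near an almost-minimum point of it, the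
-- reaction terms have the sign that contradicts a negative infimum.
theorem le_and_le_of_nearOneZero (hΛ : 1 < Λ) (hη₀ : 0 < η) (hη : 16 * Λ * η ≤ 1)
    (hη' : 16 * Λ * η ≤ Λ - 1) (h₁ : IsNonnegSolution Λ u₁ v₁) (h₂ : IsNonnegSolution Λ u₂ v₂)
    (hnear : ∀ x, u₂ x ≤ u₁ x ∧ v₁ x ≤ v₂ x ∨
      NearOneZero η (u₁ x) (v₁ x) ∨ NearOneZero η (v₂ x) (u₂ x)) :
    u₂ ≤ u₁ ∧ v₁ ≤ v₂ := by
  have hΛ₀ : 0 ≤ Λ := zero_le_one.trans hΛ.le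
  have hu (x : E) : ⨅ y, (u₁ - u₂) y ≤ u₁ x - u₂ x := ciInf_le (f := u₁ - u₂) ⟨-1, by
    rintro _ ⟨y, rfl⟩
    linarith [h₁.nonneg_u y, h₂.u_le_one hΛ₀ y, Pi.sub_apply u₁ u₂ y]⟩ x
  have hv (x : E) : ⨅ y, (v₂ - v₁) y ≤ v₂ x - v₁ x := ciInf_le (f := v₂ - v₁) ⟨-1, by
    rintro _ ⟨y, rfl⟩
    linarith [h₂.nonneg_v y, h₁.v_le_one hΛ₀ y, Pi.sub_apply v₂ v₁ y]⟩ x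
  rcases le_total (⨅ y, (u₁ - u₂) y) (⨅ y, (v₂ - v₁) y) with hle | hle
  · have hnonneg := iInf_sub_nonneg_of_nearOneZero hΛ hη₀ hη hη' h₁ h₂
      (fun x hx => (hnear x).resolve_left fun h => h.1.not_gt hx) fun x => hle.trans (hv x)
    exact ⟨fun x => sub_nonneg.1 (hnonneg.trans (hu x)),
      fun x => sub_nonneg.1 ((hnonneg.trans hle).trans (hv x))⟩
  · have hnonneg := iInf_sub_nonneg_of_nearOneZero hΛ hη₀ hη hη' h₂.swap h₁.swap
      (fun x hx => ((hnear x).resolve_left fun h => h.2.not_gt hx).symm) fun x => hle.trans (hu x)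
    exact ⟨fun x => sub_nonneg.1 ((hnonneg.trans hle).trans (hu x)),
      fun x => sub_nonneg.1 (hnonneg.trans (hv x))⟩

theorem laplacian_sub_le_of_le (hΛ : 0 ≤ Λ) (h₁ : IsNonnegSolution Λ u₁ v₁)
    (h₂ : IsNonnegSolution Λ u₂ v₂) (hu : u₂ ≤ u₁) (hv : v₁ ≤ v₂) (x : E) :
    Δ (u₁ - u₂) x ≤ (3 + Λ) * (u₁ - u₂) x := by
  have hu₁ := h₁.nonneg_u x
  have hu₂ := h₂.nonneg_u x
  have hv₁ := h₁.nonneg_v x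
  have hv₂ := h₂.nonneg_v x
  have hu₀ : 0 ≤ u₁ x - u₂ x := sub_nonneg.2 (hu x)
  have hv₀ : 0 ≤ v₂ x - v₁ x := sub_nonneg.2 (hv x)
  have hu₁' : u₁ x ^ 2 ≤ 1 := pow_le_one₀ hu₁ (h₁.u_le_one hΛ x)
  have hu₂' : u₂ x ^ 2 ≤ 1 := pow_le_one₀ hu₂ (h₂.u_le_one hΛ x)
  have hu₁₂ : u₁ x * u₂ x ≤ 1 := mul_le_one₀ (h₁.u_le_one hΛ x) hu₂ (h₂.u_le_one hΛ x)
  have hv₁' : Λ * v₁ x ^ 2 ≤ Λ :=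
    mul_le_of_le_one_right hΛ (pow_le_one₀ hv₁ (h₁.v_le_one hΛ x))
  calc Δ (u₁ - u₂) x
      = (u₁ x ^ 2 + u₁ x * u₂ x + u₂ x ^ 2 + Λ * v₁ x ^ 2 - 1) * (u₁ x - u₂ x) -
          Λ * u₂ x * (v₁ x + v₂ x) * (v₂ x - v₁ x) := by
        rw [h₁.laplacian_sub h₂, reaction, reaction]
        ring
    _ ≤ (u₁ x ^ 2 + u₁ x * u₂ x + u₂ x ^ 2 + Λ * v₁ x ^ 2 - 1) * (u₁ x - u₂ x) :=
        sub_le_self _ (by positivity)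
    _ ≤ (3 + Λ) * (u₁ x - u₂ x) := mul_le_mul_of_nonneg_right (by linarith) hu₀

theorem propagatesSmallness_sub_of_le (hΛ : 0 ≤ Λ) (h₁ : IsNonnegSolution Λ u₁ v₁)
    (h₂ : IsNonnegSolution Λ u₂ v₂) (hu : u₂ ≤ u₁) (hv : v₁ ≤ v₂) :
    PropagatesSmallness (u₁ - u₂) :=
  propagatesSmallness_of_laplacian_le (h₁.contDiff_u.sub h₂.contDiff_u)
    ((h₁.uniformContinuous_u hΛ).sub (h₂.uniformContinuous_u hΛ)) (fun x => sub_nonneg.2 (hu x))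
    (laplacian_sub_le_of_le hΛ h₁ h₂ hu hv)

theorem IsNonnegSolution.u_eq_zero (hΛ : 0 ≤ Λ) (h : IsNonnegSolution Λ u v) {p : E}
    (hp : u p = 0) : u = 0 := by
  have hlap (x : E) : Δ u x ≤ (1 + Λ) * u x := by
    have hu₀ := h.nonneg_u x
    have hv : Λ * v x ^ 2 ≤ Λ :=
      mul_le_of_le_one_right hΛ (pow_le_one₀ (h.nonneg_v x) (h.v_le_one hΛ x))
    calc Δ u x = (u x ^ 2 + Λ * v x ^ 2 - 1) * u x := by
          rw [← neg_neg (Δ u x), h.neg_laplacian_u, reaction]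
          ring
      _ ≤ (1 + Λ) * u x :=
          mul_le_mul_of_nonneg_right (by linarith [pow_le_one₀ (n := 2) hu₀ (h.u_le_one hΛ x)]) hu₀
  exact funext ((propagatesSmallness_of_laplacian_le h.contDiff_u (h.uniformContinuous_u hΛ)
    h.nonneg_u hlap).eq_zero h.nonneg_u hp)

theorem IsNonnegSolution.v_eq_of_u_eq (hΛ : 0 < Λ) (h₁ : IsNonnegSolution Λ u v₁)
    (h₂ : IsNonnegSolution Λ u v₂) (hu : u ≠ 0) : v₁ = v₂ := by
  funext x
  have hux : u x ≠ 0 := fun h => hu (h₁.u_eq_zero hΛ.le h)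
  have heq : reaction Λ (u x) (v₁ x) = reaction Λ (u x) (v₂ x) := by
    rw [← h₁.neg_laplacian_u, h₂.neg_laplacian_u]
  have hsq : v₁ x ^ 2 = v₂ x ^ 2 := by
    refine mul_left_cancel₀ (mul_ne_zero hΛ.ne' hux) ?_
    rw [reaction, reaction] at heq
    linarith
  exact (pow_left_inj₀ (h₁.nonneg_v x) (h₂.nonneg_v x) two_ne_zero).1 hsq

theorem eq_and_eq_of_le_of_apply_eq (hΛ : 0 < Λ) (h₁ : IsNonnegSolution Λ u₁ v₁)
    (h₂ : IsNonnegSolution Λ u₂ v₂) (hu : u₂ ≤ u₁) (hv : v₁ ≤ v₂) (hne : u₂ ≠ 0) {p : E}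
    (hp : u₁ p = u₂ p) : u₂ = u₁ ∧ v₂ = v₁ := by
  have hu₁₂ : u₁ = u₂ := funext fun x => sub_eq_zero.1 <|
    (propagatesSmallness_sub_of_le hΛ.le h₁ h₂ hu hv).eq_zero (fun x => sub_nonneg.2 (hu x))
      (sub_eq_zero.2 hp) x
  subst hu₁₂
  exact ⟨rfl, h₂.v_eq_of_u_eq hΛ h₁ hne⟩

end System

/-! ### Sliding -/

section Sliding

theorem eventually_comap_atTop_iff {α : Type*} {g : α → ℝ} {p : α → Prop} :
    (∀ᶠ x in comap g atTop, p x) ↔ ∃ M, ∀ x, M ≤ g x → p x := by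
  simpa using (atTop_basis.comap g).eventually_iff

theorem eventually_comap_atBot_iff {α : Type*} {g : α → ℝ} {p : α → Prop} :
    (∀ᶠ x in comap g atBot, p x) ↔ ∃ M, ∀ x, g x ≤ M → p x := by
  simpa using (atBot_basis.comap g).eventually_iff

theorem eventually_forall_dist_add_smul_lt_of_uniformContinuous {E F : Type*}
    [NormedAddCommGroup E] [NormedSpace ℝ E] [PseudoMetricSpace F] {f : E → F}
    (hf : UniformContinuous f) (e : E) (t : ℝ) {δ : ℝ} (hδ : 0 < δ) :
    ∀ᶠ s in 𝓝 t, ∀ x, dist (f (x + s • e)) (f (x + t • e)) < δ := by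
  obtain ⟨r, hr, hf⟩ := Metric.uniformContinuous_iff.1 hf δ hδ
  have hcont : Tendsto (fun s : ℝ => s • e) (𝓝 t) (𝓝 (t • e)) :=
    (continuous_id.smul continuous_const).tendsto t
  filter_upwards [Metric.tendsto_nhds.1 hcont r hr] with s hs x
  exact hf (by rwa [dist_add_left])

variable {E : Type*} [NormedAddCommGroup E] [InnerProductSpace ℝ E]
  {Λ : ℝ} {u v u₁ v₁ u₂ v₂ : E → ℝ} {e : E}

theorem comap_inner_neg_atTop (e : E) :
    comap (fun x => ⟪-e, x⟫) atTop = comap (fun x => ⟪e, x⟫) atBot := by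
  simp only [inner_neg_left, ← comap_neg_atTop, comap_comap, Function.comp_def]

theorem comap_inner_neg_atBot (e : E) :
    comap (fun x => ⟪-e, x⟫) atBot = comap (fun x => ⟪e, x⟫) atTop := by
  rw [← comap_inner_neg_atTop, neg_neg]

theorem inner_add_smul_self (he : ‖e‖ = 1) (x : E) (t : ℝ) : ⟪e, x + t • e⟫ = ⟪e, x⟫ + t := by
  rw [inner_add_right, real_inner_smul_right, real_inner_self_eq_norm_sq, he, one_pow, mul_one]

/-- Condition `(h∞)` with the direction `e` in place of that of `x_N`: `(u, v)` tends to `(1, 0)` as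
`⟪e, x⟫ → +∞` and to `(0, 1)` as `⟪e, x⟫ → -∞`, uniformly in the directions orthogonal to `e`. -/
structure HeteroclinicAlong (e : E) (u v : E → ℝ) : Prop where
  u_atTop : Tendsto u (comap (fun x => ⟪e, x⟫) atTop) (𝓝 1)
  v_atTop : Tendsto v (comap (fun x => ⟪e, x⟫) atTop) (𝓝 0)
  u_atBot : Tendsto u (comap (fun x => ⟪e, x⟫) atBot) (𝓝 0)
  v_atBot : Tendsto v (comap (fun x => ⟪e, x⟫) atBot) (𝓝 1)

namespace HeteroclinicAlong

theorem swap (h : HeteroclinicAlong e u v) : HeteroclinicAlong (-e) v u where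
  u_atTop := comap_inner_neg_atTop e ▸ h.v_atBot
  v_atTop := comap_inner_neg_atTop e ▸ h.u_atBot
  u_atBot := comap_inner_neg_atBot e ▸ h.v_atTop
  v_atBot := comap_inner_neg_atBot e ▸ h.u_atTop

theorem translate (h : HeteroclinicAlong e u v) (s : E) :
    HeteroclinicAlong e (fun x => u (x + s)) (fun x => v (x + s)) := by
  have htop : Tendsto (· + s) (comap (fun x => ⟪e, x⟫) atTop) (comap (fun x => ⟪e, x⟫) atTop) := by
    simp only [tendsto_comap_iff, Function.comp_def, inner_add_right]
    exact tendsto_atTop_add_const_right _ _ tendsto_comap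
  have hbot : Tendsto (· + s) (comap (fun x => ⟪e, x⟫) atBot) (comap (fun x => ⟪e, x⟫) atBot) := by
    simp only [tendsto_comap_iff, Function.comp_def, inner_add_right]
    exact tendsto_atBot_add_const_right _ _ tendsto_comap
  exact ⟨h.u_atTop.comp htop, h.v_atTop.comp htop, h.u_atBot.comp hbot, h.v_atBot.comp hbot⟩

theorem exists_nearOneZero (h : HeteroclinicAlong e u v) {η : ℝ} (hη : 0 < η) :
    ∃ A, ∀ x, A ≤ ⟪e, x⟫ → NearOneZero η (u x) (v x) :=
  eventually_comap_atTop_iff.1 <| (h.u_atTop.eventually_const_le (sub_lt_self 1 hη)).and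
    (h.v_atTop.eventually_le_const hη)

theorem u_ne_zero (h : HeteroclinicAlong e u v) (he : ‖e‖ = 1) : u ≠ 0 := by
  rintro rfl
  obtain ⟨A, hA⟩ := eventually_comap_atTop_iff.1 (h.u_atTop.eventually_const_lt one_pos)
  have hpos := hA (0 + A • e) (by rw [inner_add_smul_self he, inner_zero_right, zero_add])
  exact hpos.false

end HeteroclinicAlong

/-- The translations `t` along `e` after which the first solution dominates the second one, in the
order for which `(P_Λ)` is monotone: first component larger, second component smaller. -/
def admissibleShifts (e : E) (u₁ v₁ u₂ v₂ : E → ℝ) : Set ℝ :=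
  {t | u₂ ≤ (fun x => u₁ (x + t • e)) ∧ (fun x => v₁ (x + t • e)) ≤ v₂}

theorem isClosed_admissibleShifts (hu : Continuous u₁) (hv : Continuous v₁) :
    IsClosed (admissibleShifts e u₁ v₁ u₂ v₂) := by
  have hshift (x : E) : Continuous fun t : ℝ => x + t • e := by fun_prop
  exact (isClosed_le continuous_const (continuous_pi fun x => hu.comp (hshift x))).inter
    (isClosed_le (continuous_pi fun x => hv.comp (hshift x)) continuous_const)

theorem bddBelow_admissibleShifts (he : ‖e‖ = 1) (h₁ : HeteroclinicAlong e u₁ v₁)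
    (h₂ : HeteroclinicAlong e u₂ v₂) : BddBelow (admissibleShifts e u₁ v₁ u₂ v₂) := by
  obtain ⟨A, hA⟩ := eventually_comap_atBot_iff.1 (h₁.u_atBot.eventually_lt_const one_half_pos)
  obtain ⟨B, hB⟩ := eventually_comap_atTop_iff.1 (h₂.u_atTop.eventually_const_lt one_half_lt_one)
  refine ⟨A - B, fun t ht => ?_⟩
  by_contra! hlt
  have hB' : ⟪e, 0 + B • e⟫ = B := by rw [inner_add_smul_self he, inner_zero_right, zero_add]
  have hsmall := hA (0 + B • e + t • e) (by rw [inner_add_smul_self he, hB']; linarith)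
  exact lt_irrefl _ ((hB _ hB'.ge).trans_le (ht.1 _) |>.trans hsmall)

/-- `w` has infimum at most zero over a strip `|⟪e, x⟫| ≤ M`. -/
def AlmostVanishesOnStrip (e : E) (w : E → ℝ) : Prop :=
  ∃ M, ∀ δ > 0, ∃ x, |⟪e, x⟫| ≤ M ∧ w x < δ

theorem AlmostVanishesOnStrip.neg {w : E → ℝ} (h : AlmostVanishesOnStrip e w) :
    AlmostVanishesOnStrip (-e) w := by
  simpa only [AlmostVanishesOnStrip, inner_neg_left, abs_neg] using h

theorem AlmostVanishesOnStrip.exists_eq_zero (he : ‖e‖ = 1) {w : E → ℝ}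
    (h : AlmostVanishesOnStrip e w) (hw : Continuous w) (hnonneg : ∀ x, 0 ≤ w x)
    (hdep : ∀ x y, ⟪e, x⟫ = ⟪e, y⟫ → w x = w y) : ∃ p, w p = 0 := by
  obtain ⟨M, hM⟩ := h
  have hline (x : E) : w (⟪e, x⟫ • e) = w x :=
    hdep _ _ (by rw [real_inner_smul_right, real_inner_self_eq_norm_sq, he, one_pow, mul_one])
  obtain ⟨x₀, hx₀, -⟩ := hM 1 one_pos
  obtain ⟨r, -, hr⟩ := (isCompact_Icc (a := -M) (b := M)).exists_isMinOn ⟨_, abs_le.1 hx₀⟩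
    (show Continuous fun r : ℝ => w (r • e) by fun_prop).continuousOn
  refine ⟨r • e, (hnonneg _).antisymm' (le_of_forall_pos_lt_add fun δ hδ => ?_)⟩
  obtain ⟨x, hxM, hx⟩ := hM δ hδ
  rw [zero_add]
  calc w (r • e) ≤ w (⟪e, x⟫ • e) := hr (abs_le.1 hxM)
    _ = w x := hline x
    _ < δ := hx

theorem exists_dist_sub_add_nsmul_le {F : Type*} [PseudoMetricSpace F] {f : E → F} {q : E}
    (hprop : PropagatesSmallness fun x => dist (f (x + q)) (f x))
    (hsmall : AlmostVanishesOnStrip e fun x => dist (f (x + q)) (f x)) :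
    ∃ M, ∀ n : ℕ, ∀ ε > 0, ∃ x, |⟪e, x⟫| ≤ M ∧ dist (f (x - n • q)) (f (x + n • q)) ≤ ε := by
  obtain ⟨M, hM⟩ := hsmall
  refine ⟨M, fun n ε hε => ?_⟩
  obtain ⟨δ, hδ, hprop⟩ := hprop (n * ‖q‖) (ε / (2 * n + 1)) (by positivity)
  obtain ⟨x, hxM, hx⟩ := hM δ hδ
  refine ⟨x, hxM, ?_⟩
  let y : ℕ → E := fun j => x - n • q + j • q
  have hdist {j : ℕ} (hj : j < 2 * n) : dist x (y j) ≤ n * ‖q‖ := by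
    have hxy : x - y j = ((n : ℝ) - j) • q := by
      simp only [y, ← Nat.cast_smul_eq_nsmul ℝ]
      module
    have hj' : (j : ℝ) ≤ 2 * n := by exact_mod_cast hj.le
    rw [dist_eq_norm, hxy, norm_smul, Real.norm_eq_abs]
    gcongr
    exact abs_le.2 ⟨by linarith, by linarith [j.cast_nonneg (α := ℝ)]⟩
  have hstep {j : ℕ} (hj : j < 2 * n) : dist (f (y j)) (f (y (j + 1))) ≤ ε / (2 * n + 1) := by
    rw [dist_comm, show y (j + 1) = y j + q by simp only [y, succ_nsmul, add_assoc]]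
    exact (hprop x _ (hdist hj) hx).le
  have htelescope := dist_le_range_sum_of_dist_le (f := f ∘ y) (2 * n) hstep
  simp only [Function.comp_apply, y, zero_smul, add_zero, Finset.sum_const, Finset.card_range,
    nsmul_eq_mul] at htelescope
  calc dist (f (x - n • q)) (f (x + n • q))
      = dist (f (x - n • q)) (f (x - n • q + (2 * n) • q)) := by
        rw [two_mul, add_nsmul, ← add_assoc, sub_add_cancel]
    _ ≤ ((2 * n : ℕ) : ℝ) * (ε / (2 * n + 1)) := htelescope
    _ ≤ ε := by
        rw [mul_div_assoc', div_le_iff₀ (by positivity)]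
        push_cast
        nlinarith

theorem inner_nonpos_of_almostVanishesOnStrip {F : Type*} [MetricSpace F] {f : E → F} {a b : F}
    (hab : a ≠ b) (hTop : Tendsto f (comap (fun x => ⟪e, x⟫) atTop) (𝓝 a))
    (hBot : Tendsto f (comap (fun x => ⟪e, x⟫) atBot) (𝓝 b)) {q : E}
    (hprop : PropagatesSmallness fun x => dist (f (x + q)) (f x))
    (hsmall : AlmostVanishesOnStrip e fun x => dist (f (x + q)) (f x)) : ⟪e, q⟫ ≤ 0 := by
  by_contra! hq
  have hε : 0 < dist a b / 3 := div_pos (dist_pos.2 hab) three_pos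
  obtain ⟨A, hA⟩ := eventually_comap_atTop_iff.1 (Metric.tendsto_nhds.1 hTop _ hε)
  obtain ⟨B, hB⟩ := eventually_comap_atBot_iff.1 (Metric.tendsto_nhds.1 hBot _ hε)
  obtain ⟨M, hM⟩ := exists_dist_sub_add_nsmul_le hprop hsmall
  obtain ⟨n, hn⟩ := exists_nat_ge (max (M + A) (M - B) / ⟪e, q⟫)
  rw [div_le_iff₀ hq, max_le_iff] at hn
  obtain ⟨x, hxM, hx⟩ := hM n _ hε
  have hinner : ⟪e, n • q⟫ = n * ⟪e, q⟫ := by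
    rw [← Nat.cast_smul_eq_nsmul ℝ, real_inner_smul_right]
  rw [abs_le] at hxM
  have hhigh := hA (x + n • q) (by rw [inner_add_right, hinner]; linarith)
  have hlow := hB (x - n • q) (by rw [inner_sub_right, hinner]; linarith)
  rw [dist_comm] at hhigh
  linarith [dist_triangle4 a (f (x + n • q)) (f (x - n • q)) b,
    dist_comm (f (x + n • q)) (f (x - n • q))]

-- A function with distinct limits at both ends of `e` has no almost-period transversal to `eᗮ`: its
-- values along `x + ℤ q` would vary too slowly to pass from one limit to the other.
theorem inner_eq_zero_of_almostVanishesOnStrip {F : Type*} [MetricSpace F] {f : E → F} {a b : F}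
    (hab : a ≠ b) (hTop : Tendsto f (comap (fun x => ⟪e, x⟫) atTop) (𝓝 a))
    (hBot : Tendsto f (comap (fun x => ⟪e, x⟫) atBot) (𝓝 b)) {q : E}
    (hprop : PropagatesSmallness fun x => dist (f (x + q)) (f x))
    (hsmall : AlmostVanishesOnStrip e fun x => dist (f (x + q)) (f x)) : ⟪e, q⟫ = 0 := by
  refine (inner_nonpos_of_almostVanishesOnStrip hab hTop hBot hprop hsmall).antisymm ?_
  rw [← neg_nonpos, ← inner_neg_left]
  exact inner_nonpos_of_almostVanishesOnStrip hab.symm (comap_inner_neg_atTop e ▸ hBot)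
    (comap_inner_neg_atBot e ▸ hTop) hprop hsmall.neg

variable [FiniteDimensional ℝ E]

theorem exists_forall_mem_admissibleShifts (hΛ : 1 < Λ) (he : ‖e‖ = 1)
    (h₁ : IsNonnegSolution Λ u₁ v₁) (h₂ : IsNonnegSolution Λ u₂ v₂)
    (h₁e : HeteroclinicAlong e u₁ v₁) (h₂e : HeteroclinicAlong e u₂ v₂) :
    ∃ A B, ∀ t, (∀ x, B < ⟪e, x⟫ → ⟪e, x⟫ + t < A →
      u₂ x ≤ u₁ (x + t • e) ∧ v₁ (x + t • e) ≤ v₂ x) → t ∈ admissibleShifts e u₁ v₁ u₂ v₂ := by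
  have hΛ₀ : 0 < Λ := one_pos.trans hΛ
  obtain ⟨η, hη₀, hη, hη'⟩ : ∃ η > 0, 16 * Λ * η ≤ 1 ∧ 16 * Λ * η ≤ Λ - 1 := by
    have hΛη : 16 * Λ * ((Λ - 1) / (16 * Λ ^ 2)) = (Λ - 1) / Λ := by field_simp
    refine ⟨(Λ - 1) / (16 * Λ ^ 2), div_pos (by linarith) (by positivity), ?_, ?_⟩
    · rw [hΛη, div_le_one hΛ₀]
      linarith
    · rw [hΛη]
      exact div_le_self (by linarith) hΛ.le
  obtain ⟨A, hA⟩ := h₁e.exists_nearOneZero hη₀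
  obtain ⟨B, hB⟩ := h₂e.swap.exists_nearOneZero hη₀
  refine ⟨A, -B, fun t ht => le_and_le_of_nearOneZero hΛ hη₀ hη hη' (h₁.translate (t • e)) h₂
    fun x => ?_⟩
  rcases lt_or_ge (-B) ⟪e, x⟫ with hxB | hxB
  · rcases lt_or_ge (⟪e, x⟫ + t) A with hxA | hxA
    · exact Or.inl (ht x hxB hxA)
    · exact Or.inr (Or.inl (hA _ (by rwa [inner_add_smul_self he])))
  · exact Or.inr (Or.inr (hB x (by rw [inner_neg_left]; linarith)))

-- If neither difference almost vanished on strips, the infimum of the admissible shifts could still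
-- be lowered by uniform continuity.
theorem exists_critical_shift (hΛ : 1 < Λ) (he : ‖e‖ = 1)
    (h₁ : IsNonnegSolution Λ u₁ v₁) (h₂ : IsNonnegSolution Λ u₂ v₂)
    (h₁e : HeteroclinicAlong e u₁ v₁) (h₂e : HeteroclinicAlong e u₂ v₂) :
    ∃ t ∈ admissibleShifts e u₁ v₁ u₂ v₂,
      AlmostVanishesOnStrip e (fun x => u₁ (x + t • e) - u₂ x) ∨
        AlmostVanishesOnStrip e (fun x => v₂ x - v₁ (x + t • e)) := by
  have hΛ₀ : 0 ≤ Λ := zero_le_one.trans hΛ.le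
  obtain ⟨A, B, hAB⟩ := exists_forall_mem_admissibleShifts hΛ he h₁ h₂ h₁e h₂e
  have hbdd := bddBelow_admissibleShifts he h₁e h₂e
  have hne : (admissibleShifts e u₁ v₁ u₂ v₂).Nonempty :=
    ⟨A - B, hAB _ fun x hxB hxA => absurd hxA (by linarith)⟩
  let t := sInf (admissibleShifts e u₁ v₁ u₂ v₂)
  refine ⟨t, (isClosed_admissibleShifts h₁.contDiff_u.continuous
    h₁.contDiff_v.continuous).csInf_mem hne hbdd, ?_⟩
  by_contra! hgap
  simp only [AlmostVanishesOnStrip, not_exists, not_forall, not_and, not_lt, exists_prop] at hgap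
  obtain ⟨⟨δ, hδ, hδu⟩, ⟨δ', hδ', hδv⟩⟩ := hgap.imp (· (max |B| |A - t + 1|))
    (· (max |B| |A - t + 1|))
  obtain ⟨s, hst, hts, hsu, hsv⟩ := ((frequently_lt_nhds t).and_eventually
    ((eventually_gt_nhds (sub_one_lt t)).and
      ((eventually_forall_dist_add_smul_lt_of_uniformContinuous (h₁.uniformContinuous_u hΛ₀) e t
        hδ).and (eventually_forall_dist_add_smul_lt_of_uniformContinuous
          (h₁.uniformContinuous_v hΛ₀) e t hδ')))).exists
  refine hst.not_ge (csInf_le hbdd (hAB s fun x hxB hxA => ?_))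
  have hstrip : |⟪e, x⟫| ≤ max |B| |A - t + 1| := abs_le_max_abs_abs hxB.le (by linarith)
  have hsu := hsu x
  have hsv := hsv x
  rw [Real.dist_eq, abs_lt] at hsu hsv
  exact ⟨by linarith [hδu x hstrip], by linarith [hδv x hstrip]⟩

theorem le_add_and_add_le_of_inner_eq_zero (hΛ : 1 < Λ) (he : ‖e‖ = 1)
    (h : IsNonnegSolution Λ u v) (hh : HeteroclinicAlong e u v) {s : E} (hs : ⟪e, s⟫ = 0) (x : E) :
    u x ≤ u (x + s) ∧ v (x + s) ≤ v x := by
  have hΛ₀ : 0 ≤ Λ := zero_le_one.trans hΛ.le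
  obtain ⟨t, ⟨hu, hv⟩, hvan⟩ := exists_critical_shift hΛ he (h.translate s) h (hh.translate s) hh
  simp only [add_assoc] at hu hv hvan
  have hdistu (x : E) : dist (u (x + (t • e + s))) (u x) = u (x + (t • e + s)) - u x := by
    rw [Real.dist_eq, abs_of_nonneg (sub_nonneg.2 (hu x))]
  have hdistv (x : E) : dist (v (x + (t • e + s))) (v x) = v x - v (x + (t • e + s)) := by
    rw [dist_comm, Real.dist_eq, abs_of_nonneg (sub_nonneg.2 (hv x))]
  have hq : ⟪e, t • e + s⟫ = 0 := by
    rcases hvan with hvan | hvan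
    · simp only [← hdistu] at hvan
      refine inner_eq_zero_of_almostVanishesOnStrip one_ne_zero hh.u_atTop hh.u_atBot ?_ hvan
      simp only [hdistu]
      exact propagatesSmallness_sub_of_le hΛ₀ (h.translate (t • e + s)) h hu hv
    · simp only [← hdistv] at hvan
      refine inner_eq_zero_of_almostVanishesOnStrip zero_ne_one hh.v_atTop hh.v_atBot ?_ hvan
      simp only [hdistv]
      exact propagatesSmallness_sub_of_le hΛ₀ h.swap (h.translate (t • e + s)).swap hv hu
  have ht : t = 0 := by
    rwa [add_comm, inner_add_smul_self he, hs, zero_add] at hq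
  simpa only [ht, zero_smul, zero_add] using And.intro (hu x) (hv x)

theorem eq_and_eq_of_inner_eq (hΛ : 1 < Λ) (he : ‖e‖ = 1)
    (h : IsNonnegSolution Λ u v) (hh : HeteroclinicAlong e u v) {x y : E} (hxy : ⟪e, x⟫ = ⟪e, y⟫) :
    u x = u y ∧ v x = v y := by
  have hle := le_add_and_add_le_of_inner_eq_zero hΛ he h hh (s := y - x)
    (by rw [inner_sub_right, hxy, sub_self]) x
  have hge := le_add_and_add_le_of_inner_eq_zero hΛ he h hh (s := x - y)
    (by rw [inner_sub_right, hxy, sub_self]) y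
  rw [add_sub_cancel] at hle hge
  exact ⟨hle.1.antisymm hge.1, hge.2.antisymm hle.2⟩

theorem stmt_1_general (hΛ : 1 < Λ) (he : ‖e‖ = 1)
    (h₁ : IsNonnegSolution Λ u₁ v₁) (h₂ : IsNonnegSolution Λ u₂ v₂)
    (h₁e : HeteroclinicAlong e u₁ v₁) (h₂e : HeteroclinicAlong e u₂ v₂) :
    ∃ t : ℝ, ∀ x, u₂ x = u₁ (x + t • e) ∧ v₂ x = v₁ (x + t • e) := by
  obtain ⟨t, ⟨hu, hv⟩, hvan⟩ := exists_critical_shift hΛ he h₁ h₂ h₁e h₂e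
  have h₁t := h₁.translate (t • e)
  have h₁te := h₁e.translate (t • e)
  have hsymm₁ {x y : E} := eq_and_eq_of_inner_eq hΛ he h₁t h₁te (x := x) (y := y)
  have hsymm₂ {x y : E} := eq_and_eq_of_inner_eq hΛ he h₂ h₂e (x := x) (y := y)
  suffices heq : u₂ = (fun x => u₁ (x + t • e)) ∧ v₂ = fun x => v₁ (x + t • e) from
    ⟨t, fun x => ⟨congrFun heq.1 x, congrFun heq.2 x⟩⟩
  have hΛ₀ : 0 < Λ := one_pos.trans hΛ
  rcases hvan with hvan | hvan
  · obtain ⟨p, hp⟩ := hvan.exists_eq_zero he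
      (h₁t.contDiff_u.continuous.sub h₂.contDiff_u.continuous) (fun x => sub_nonneg.2 (hu x))
      fun x y hxy => congrArg₂ _ (hsymm₁ hxy).1 (hsymm₂ hxy).1
    exact eq_and_eq_of_le_of_apply_eq hΛ₀ h₁t h₂ hu hv (h₂e.u_ne_zero he) (sub_eq_zero.1 hp)
  · obtain ⟨p, hp⟩ := hvan.exists_eq_zero he
      (h₂.contDiff_v.continuous.sub h₁t.contDiff_v.continuous) (fun x => sub_nonneg.2 (hv x))
      fun x y hxy => congrArg₂ _ (hsymm₂ hxy).2 (hsymm₁ hxy).2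
    have heq := eq_and_eq_of_le_of_apply_eq hΛ₀ h₂.swap h₁t.swap hv hu
      (h₁te.swap.u_ne_zero (by rwa [norm_neg])) (sub_eq_zero.1 hp)
    exact ⟨heq.2.symm, heq.1.symm⟩

end Sliding

section Coordinates

theorem lap_eq_laplacian {N : ℕ} {f : EuclideanSpace ℝ (Fin N) → ℝ} (hf : ContDiff ℝ 2 f)
    (x : EuclideanSpace ℝ (Fin N)) : lap N f x = Δ f x := by
  have hfderiv : Differentiable ℝ (fderiv ℝ f) :=
    (hf.fderiv_right (m := 1) (by norm_num)).differentiable (by simp)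
  simp only [laplacian_apply_eq_sum_fderiv_fderiv (EuclideanSpace.basisFun (Fin N) ℝ), lap,
    EuclideanSpace.basisFun_apply]
  refine Finset.sum_congr rfl fun i _ => ?_
  rw [fderiv_clm_apply (hfderiv x) (differentiableAt_const _)]
  simp

theorem IsSolution.isNonnegSolution {N : ℕ} {Λ : ℝ} {u v : EuclideanSpace ℝ (Fin N) → ℝ}
    (h : IsSolution N Λ u v) (hu : ∀ x, 0 ≤ u x) (hv : ∀ x, 0 ≤ v x) :
    IsNonnegSolution Λ u v where
  contDiff_u := h.1
  contDiff_v := h.2.1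
  neg_laplacian_u x := by rw [← lap_eq_laplacian h.1, h.2.2.1, reaction]
  neg_laplacian_v x := by
    rw [← lap_eq_laplacian h.2.1, h.2.2.2, reaction]
    ring
  nonneg_u := hu
  nonneg_v := hv

theorem Hinf.heteroclinicAlong {N : ℕ} {u v : EuclideanSpace ℝ (Fin (N + 1)) → ℝ}
    (h : Hinf N u v) :
    HeteroclinicAlong (EuclideanSpace.single (Fin.last N) (1 : ℝ)) u v := by
  have hinner (x : EuclideanSpace ℝ (Fin (N + 1))) :
      ⟪EuclideanSpace.single (Fin.last N) (1 : ℝ), x⟫ = x (Fin.last N) := by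
    simp [EuclideanSpace.inner_single_left]
  have hTop (ε : ℝ) (hε : 0 < ε) := eventually_comap_atTop_iff.2 (h.1 ε hε)
  have hBot (ε : ℝ) (hε : 0 < ε) := eventually_comap_atBot_iff.2 (h.2 ε hε)
  constructor <;> simp only [hinner, Metric.tendsto_nhds, Real.dist_eq, sub_zero]
  · exact fun ε hε => (hTop ε hε).mono fun x hx => hx.1
  · exact fun ε hε => (hTop ε hε).mono fun x hx => hx.2
  · exact fun ε hε => (hBot ε hε).mono fun x hx => hx.1
  · exact fun ε hε => (hBot ε hε).mono fun x hx => hx.2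

end Coordinates

/-- Corollary 1.2: uniqueness, modulo translations, of solutions
of `(P_Λ)` satisfying `(h∞)`. -/
theorem stmt_1 (N : ℕ) (Λ : ℝ) (hΛ : 1 < Λ)
    (u₁ v₁ u₂ v₂ : EuclideanSpace ℝ (Fin (N + 1)) → ℝ)
    (hsol₁ : IsSolution (N + 1) Λ u₁ v₁) (hsol₂ : IsSolution (N + 1) Λ u₂ v₂)
    (hu₁ : ∀ x, 0 ≤ u₁ x) (hv₁ : ∀ x, 0 ≤ v₁ x)
    (hu₂ : ∀ x, 0 ≤ u₂ x) (hv₂ : ∀ x, 0 ≤ v₂ x)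
    (hinf₁ : Hinf N u₁ v₁) (hinf₂ : Hinf N u₂ v₂) :
    ∃ τ : EuclideanSpace ℝ (Fin (N + 1)),
      ∀ x, u₂ x = u₁ (x + τ) ∧ v₂ x = v₁ (x + τ) := by
  have ⟨t, ht⟩ := stmt_1_general hΛ (by simp) (hsol₁.isNonnegSolution hu₁ hv₁)
    (hsol₂.isNonnegSolution hu₂ hv₂) hinf₁.heteroclinicAlong hinf₂.heteroclinicAlong
  exact ⟨_, ht⟩
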